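/- Let 0 ≤ L ≤ ∞ and n > 0. Let ν be a Borel probability measure on M_L and let (ν_i)_i be a sequence of Borel probability measures on M_L. Then ν_i → ν in the weak topology if and only if h_{ν_i} → h_ν for every L-layer MPNN model φ and every Lipschitz function ψ : ℝ^{d_L} → ℝⁿ. -/

import Mathlib

open MeasureTheory Set

noncomputable section

/-- Borel measures of total mass at most one on `X`. -/
abbrev SubProb (X : Type) [MeasurableSpace X] : Type :=
  {μ : Measure X // μ Set.univ ≤ 1}

/-- The weak topology on `SubProb X`: the coarsest topology making all maps
`μ ↦ ∫ f dμ` for bounded continuous `f` continuous. -/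
def subProbWeakTop (X : Type) [MeasurableSpace X] [TopologicalSpace X] :
    TopologicalSpace (SubProb X) :=
  ⨅ f : BoundedContinuousFunction X ℝ,
    TopologicalSpace.induced (fun μ => ∫ x, f x ∂μ.val) inferInstance

/-- Iterated degree measure spaces with their (weak) topologies:
`M 0` is a one-point space and `M (h+1)` is the space of Borel measures of total
mass at most one on `M h` with the weak topology. -/
def IDM : ℕ → Σ X : Type, TopologicalSpace X
  | 0 => ⟨Unit, inferInstance⟩
  | (h+1) =>
      let p := IDM h
      ⟨@SubProb p.1 (@borel p.1 p.2), @subProbWeakTop p.1 (@borel p.1 p.2) p.2⟩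

/-- The space of iterated degree measures of depth `h`. -/
def M (h : ℕ) : Type := (IDM h).1

instance (h : ℕ) : TopologicalSpace (M h) := (IDM h).2
instance (h : ℕ) : MeasurableSpace (M h) := borel (M h)
instance (h : ℕ) : BorelSpace (M h) := ⟨rfl⟩

def toSub {h : ℕ} (α : M (h+1)) : SubProb (M h) := α
def ofSub {h : ℕ} (μ : SubProb (M h)) : M (h+1) := μ
/-- The underlying measure of an iterated degree measure. -/
def toMeas {h : ℕ} (α : M (h+1)) : Measure (M h) := (toSub α).1

/-- Borel probability measures on `X`. -/
abbrev ProbM (X : Type) [MeasurableSpace X] : Type :=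
  {μ : Measure X // IsProbabilityMeasure μ}

/-- The weak topology on Borel probability measures. -/
def probWeakTop (X : Type) [MeasurableSpace X] [TopologicalSpace X] :
    TopologicalSpace (ProbM X) :=
  ⨅ f : BoundedContinuousFunction X ℝ,
    TopologicalSpace.induced (fun μ => ∫ x, f x ∂μ.val) inferInstance
/-- The projections `p_{h+1,h} : M (h+1) → M h`, given by pushforward. -/
def projM : (h : ℕ) → M (h+1) → M h
  | 0, _ => ()
  | (h+1), α => ofSub ⟨(toMeas α).map (projM h), by
      by_cases hf : AEMeasurable (projM h) (toMeas α)
      · rw [Measure.map_apply_of_aemeasurable hf MeasurableSet.univ, Set.preimage_univ]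
        exact (toSub α).2
      · rw [Measure.map_of_not_aemeasurable hf]
        simp⟩

/-- The inverse limit `M_∞` of the spaces `M h` along the projections,
with the subspace topology of the product topology. -/
abbrev Minf : Type := {α : (h : ℕ) → M h // ∀ h, projM h (α (h+1)) = α h}

instance : MeasurableSpace Minf := borel Minf
instance : BorelSpace Minf := ⟨rfl⟩
/-- An MPNN model: dimensions `d t`, an initial feature `φ₀ ∈ ℝ^{d 0}`, and
continuous update functions `φ t : ℝ^{d t} → ℝ^{d (t+1)}`. An `L`-layer model uses
the layers `φ 0, …, φ (L-1)`. -/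
structure MPNNModel where
  d : ℕ → ℕ
  φ₀ : EuclideanSpace ℝ (Fin (d 0))
  φ : (t : ℕ) → EuclideanSpace ℝ (Fin (d t)) → EuclideanSpace ℝ (Fin (d (t+1)))
  cont : ∀ t, Continuous (φ t)

/-- MPNN features on iterated degree measures: `h^{(0)}_α = φ₀` and
`h^{(t+1)}_α = φ_t (∫ h^{(t)}_β dα(β))`. -/
def idmFeat (m : MPNNModel) : (t : ℕ) → M t → EuclideanSpace ℝ (Fin (m.d t))
  | 0, _ => m.φ₀
  | (t+1), α => m.φ t (∫ β, idmFeat m t β ∂(toMeas α))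



/-- The set `{∫ h^{(t)}_β dα : α ∈ M (t+1)}` of attainable aggregated inputs of the
layer function `φ t`. -/
def aggSet (m : MPNNModel) (t : ℕ) : Set (EuclideanSpace ℝ (Fin (m.d t))) :=
  {z | ∃ α : M (t+1), z = ∫ β, idmFeat m t β ∂(toMeas α)}

/-- An `L`-layer MPNN model: each of the used layer functions is Lipschitz on its
compact set of attainable aggregated inputs. -/
def LipModel (m : MPNNModel) (L : ℕ) : Prop :=
  ∀ t, t < L → ∃ K : NNReal, LipschitzOnWith K (m.φ t) (aggSet m t)


/-- The set `N_t^1` of real-valued MPNN feature functions on `M t`. -/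
def NSet (t : ℕ) : Set (M t → ℝ) :=
  {f | ∃ m : MPNNModel, LipModel m t ∧ m.d t = 1 ∧
    f = fun α => ∑ i, idmFeat m t α i}

/-- The set `N_∞^1` of real-valued MPNN feature functions on `M = M_∞`. -/
def NSetInf : Set (Minf → ℝ) :=
  {f | ∃ (t : ℕ) (m : MPNNModel), LipModel m t ∧ m.d t = 1 ∧
    f = fun α => ∑ i, idmFeat m t (α.1 t) i}

instance (X : Type) [MeasurableSpace X] [TopologicalSpace X] :
    TopologicalSpace (ProbM X) := probWeakTop X


set_option linter.unusedSectionVars false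
open Filter Topology BoundedContinuousFunction TopologicalSpace

section generic
variable {X : Type} [MeasurableSpace X] [TopologicalSpace X] [BorelSpace X]

lemma subProb_cont_int (f : X →ᵇ ℝ) :
    @Continuous (SubProb X) ℝ (subProbWeakTop X) _ (fun μ => ∫ x, f x ∂μ.1) := by
  rw [continuous_iff_le_induced]
  exact iInf_le _ f

lemma subProb_cont_of {Y : Type} [TopologicalSpace Y] (g : Y → SubProb X)
    (h : ∀ f : X →ᵇ ℝ, Continuous fun y => ∫ x, f x ∂(g y).1) :
    @Continuous Y (SubProb X) _ (subProbWeakTop X) g := by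
  refine continuous_iInf_rng.2 fun f => ?_
  exact continuous_induced_rng.2 (h f)

lemma prob_tendsto_iff (ν : ProbM X) (νs : ℕ → ProbM X) :
    Tendsto νs atTop (𝓝 ν) ↔
      ∀ f : X →ᵇ ℝ, Tendsto (fun i => ∫ x, f x ∂(νs i).1) atTop (𝓝 (∫ x, f x ∂ν.1)) := by
  have : 𝓝 ν = ⨅ f : X →ᵇ ℝ, comap (fun μ : ProbM X => ∫ x, f x ∂μ.1) (𝓝 (∫ x, f x ∂ν.1)) := by
    change @nhds _ (probWeakTop X) ν = _
    unfold probWeakTop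
    rw [nhds_iInf]
    simp only [nhds_induced]
  rw [this, tendsto_iInf]
  simp only [tendsto_comap_iff]
  rfl

lemma int_sub_le [CompactSpace X] (μ : Measure X) (hμ : μ univ ≤ 1) (f g : C(X, ℝ)) :
    |∫ x, f x ∂μ - ∫ x, g x ∂μ| ≤ ‖f - g‖ := by
  have : IsFiniteMeasure μ := ⟨hμ.trans_lt (by simp)⟩
  have hi : ∀ f : C(X, ℝ), Integrable (fun x => f x) μ := fun f =>
    (BoundedContinuousFunction.mkOfCompact f).integrable μ
  rw [← integral_sub (hi f) (hi g)]
  have h1 : ‖∫ x, (f x - g x) ∂μ‖ ≤ ‖f - g‖ * μ.real univ :=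
    norm_integral_le_of_norm_le_const (Eventually.of_forall fun x => (f - g).norm_coe_le_norm x)
  have h2 : μ.real univ ≤ 1 := by
    simpa [Measure.real] using ENNReal.toReal_mono (by simp) hμ
  rw [Real.norm_eq_abs] at h1
  nlinarith [norm_nonneg (f - g)]

lemma int_cont [CompactSpace X] (μ : Measure X) (hμ : μ univ ≤ 1) :
    Continuous (fun f : C(X, ℝ) => ∫ x, f x ∂μ) := by
  refine (LipschitzWith.of_dist_le_mul (K := 1) fun f g => ?_).continuous
  rw [Real.dist_eq, dist_eq_norm]
  simpa using int_sub_le μ hμ f g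

lemma int_eq_of_dense [CompactSpace X] (S : Set C(X, ℝ)) (hS : closure S = ⊤)
    (μ ν : Measure X) (hμ : μ univ ≤ 1) (hν : ν univ ≤ 1)
    (h : ∀ f ∈ S, ∫ x, f x ∂μ = ∫ x, f x ∂ν) (f : C(X, ℝ)) : ∫ x, f x ∂μ = ∫ x, f x ∂ν := by
  have hc : IsClosed {f : C(X, ℝ) | ∫ x, f x ∂μ = ∫ x, f x ∂ν} :=
    isClosed_eq (int_cont μ hμ) (int_cont ν hν)
  have : closure S ⊆ {f : C(X, ℝ) | ∫ x, f x ∂μ = ∫ x, f x ∂ν} := closure_minimal h hc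
  exact this (hS ▸ trivial)

lemma measure_eq_of_dense [CompactSpace X] [MetrizableSpace X] (S : Set C(X, ℝ))
    (hS : closure S = ⊤)
    (μ ν : Measure X) (hμ : μ univ ≤ 1) (hν : ν univ ≤ 1)
    (h : ∀ f ∈ S, ∫ x, f x ∂μ = ∫ x, f x ∂ν) : μ = ν := by
  have : IsFiniteMeasure μ := ⟨hμ.trans_lt (by simp)⟩
  have : IsFiniteMeasure ν := ⟨hν.trans_lt (by simp)⟩
  refine ext_of_forall_integral_eq_of_IsFiniteMeasure fun f => ?_
  exact int_eq_of_dense S hS μ ν hμ hν h f.toContinuousMap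

lemma prob_tendsto_of_dense [CompactSpace X] (S : Set C(X, ℝ)) (hS : closure S = ⊤)
    (ν : ProbM X) (νs : ℕ → ProbM X)
    (h : ∀ f ∈ S, Tendsto (fun i => ∫ x, f x ∂(νs i).1) atTop (𝓝 (∫ x, f x ∂ν.1))) :
    Tendsto νs atTop (𝓝 ν) := by
  rw [prob_tendsto_iff]
  intro f
  have hp : ∀ ν : ProbM X, ν.1 univ ≤ 1 := fun ν => by have := ν.2; simp
  rw [Metric.tendsto_atTop]
  intro ε hε
  have hf : f.toContinuousMap ∈ closure S := hS ▸ trivial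
  obtain ⟨g, hg, hfg⟩ := Metric.mem_closure_iff.1 hf (ε / 3) (by positivity)
  obtain ⟨N, hN⟩ := Metric.tendsto_atTop.1 (h g hg) (ε / 3) (by positivity)
  refine ⟨N, fun i hi => ?_⟩
  have h1 := hN i hi
  have h2 := int_sub_le (νs i).1 (hp _) f.toContinuousMap g
  have h3 := int_sub_le ν.1 (hp _) f.toContinuousMap g
  rw [dist_eq_norm] at hfg
  rw [Real.dist_eq] at h1 ⊢
  change |∫ x, f x ∂(νs i).1 - _| ≤ _ at h2
  change |∫ x, f x ∂ν.1 - _| ≤ _ at h3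
  rw [abs_lt] at *
  rw [abs_le] at *
  constructor <;> linarith

lemma subProb_compact [CompactSpace X] [T2Space X] :
    @CompactSpace (SubProb X) (subProbWeakTop X) := by
  let _ : TopologicalSpace (SubProb X) := subProbWeakTop X
  have hc := isCompact_setOfPred_finiteMeasure_le_of_compactSpace X 1
  have : CompactSpace {μ : FiniteMeasure X | μ.mass ≤ 1} := isCompact_iff_compactSpace.1 hc
  let g : {μ : FiniteMeasure X | μ.mass ≤ 1} → SubProb X := fun μ => ⟨μ.1.1, by
    have h : μ.1.mass ≤ 1 := μ.2
    have h2 : ((μ.1.mass : NNReal) : ENNReal) ≤ 1 := by exact_mod_cast h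
    rw [FiniteMeasure.ennreal_mass] at h2
    exact h2⟩
  have hg : Continuous g := subProb_cont_of g fun f =>
    (FiniteMeasure.continuous_integral_boundedContinuousFunction f).comp continuous_subtype_val
  have hs : Function.Surjective g := by
    intro μ
    have : IsFiniteMeasure μ.1 := ⟨μ.2.trans_lt (by simp)⟩
    let μ' : FiniteMeasure X := ⟨μ.1, this⟩
    have h2 : ((μ'.mass : NNReal) : ENNReal) ≤ 1 := by
      rw [FiniteMeasure.ennreal_mass]
      exact μ.2
    have h3 : μ'.mass ≤ 1 := by exact_mod_cast h2
    exact ⟨⟨μ', h3⟩, rfl⟩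
  exact hs.compactSpace hg

lemma subProb_metrizable [CompactSpace X] [MetrizableSpace X] :
    @MetrizableSpace (SubProb X) (subProbWeakTop X) := by
  let _ : TopologicalSpace (SubProb X) := subProbWeakTop X
  have : CompactSpace (SubProb X) := subProb_compact
  let _ : MetricSpace X := metrizableSpaceMetric X
  have : SecondCountableTopology X := inferInstance
  let u := denseSeq C(X, ℝ)
  let g : SubProb X → ℕ → ℝ := fun μ n => ∫ x, u n x ∂μ.1
  have hg : Continuous g := continuous_pi fun n =>
    subProb_cont_int (BoundedContinuousFunction.mkOfCompact (u n))
  have hi : Function.Injective g := by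
    intro μ ν h
    refine Subtype.ext (measure_eq_of_dense (range u) ?_ _ _ μ.2 ν.2 ?_)
    · exact (denseRange_denseSeq C(X, ℝ)).closure_range
    · rintro _ ⟨n, rfl⟩
      exact congrFun h n
  exact (hg.isClosedEmbedding hi).isEmbedding.metrizableSpace

end generic

lemma M_good (h : ℕ) : CompactSpace (M h) ∧ MetrizableSpace (M h) := by
  induction h with
  | zero =>
    exact ⟨inferInstanceAs (CompactSpace Unit), inferInstanceAs (MetrizableSpace Unit)⟩
  | succ h ih =>
    obtain ⟨h1, h2⟩ := ih
    exact ⟨subProb_compact (X := M h), subProb_metrizable (X := M h)⟩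

instance (h : ℕ) : CompactSpace (M h) := (M_good h).1
instance (h : ℕ) : MetrizableSpace (M h) := (M_good h).2

lemma toMeas_le {h : ℕ} (α : M (h+1)) : toMeas α univ ≤ 1 := (toSub α).2

instance {h : ℕ} (α : M (h+1)) : IsFiniteMeasure (toMeas α) :=
  ⟨(toMeas_le α).trans_lt (by simp)⟩

lemma M_cont_int {h : ℕ} (f : M h → ℝ) (hf : Continuous f) :
    Continuous fun α : M (h+1) => ∫ x, f x ∂toMeas α :=
  subProb_cont_int (X := M h) (BoundedContinuousFunction.mkOfCompact ⟨f, hf⟩)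

lemma M_integrable {X E : Type} [MeasurableSpace X] [TopologicalSpace X] [BorelSpace X]
    [CompactSpace X] [NormedAddCommGroup E] [SecondCountableTopology E] [MeasurableSpace E]
    [BorelSpace E] (μ : Measure X) [IsFiniteMeasure μ] (f : X → E) (hf : Continuous f) :
    Integrable f μ :=
  (BoundedContinuousFunction.mkOfCompact ⟨f, hf⟩).integrable μ

lemma M_ext {h : ℕ} {α β : M (h+1)} (hh : toMeas α = toMeas β) : α = β :=
  Subtype.ext (p := fun μ : Measure (M h) => μ univ ≤ 1) hh

lemma projM_cont (h : ℕ) : Continuous (projM h) := by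
  induction h with
  | zero => exact continuous_const (y := ())
  | succ h ih =>
    suffices key : ∀ f : M h →ᵇ ℝ, Continuous fun α : M (h+2) =>
        ∫ x, f x ∂(toSub (projM (h+1) α)).1 from
      subProb_cont_of (X := M h) (fun α : M (h+2) => toSub (projM (h+1) α)) key
    intro f
    have : ∀ α : M (h+2), ∫ x, f x ∂((toMeas α).map (projM h)) = ∫ x, f (projM h x) ∂(toMeas α) :=
      fun α => integral_map ih.measurable.aemeasurable
        f.continuous.measurable.aestronglyMeasurable
    exact (M_cont_int (fun x => f (projM h x)) (f.continuous.comp ih)).congr fun α => (this α).symm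

lemma toMeas_projM (h : ℕ) (α : M (h+2)) :
    toMeas (projM (h+1) α) = (toMeas α).map (projM h) := rfl

lemma vec_int_apply {X : Type} [MeasurableSpace X] [TopologicalSpace X] [BorelSpace X]
    [CompactSpace X] (μ : Measure X) [IsFiniteMeasure μ] {k : ℕ}
    (f : X → EuclideanSpace ℝ (Fin k)) (hf : Continuous f) (i : Fin k) :
    (∫ x, f x ∂μ) i = ∫ x, f x i ∂μ :=
  ((EuclideanSpace.proj (𝕜 := ℝ) i).integral_comp_comm (M_integrable μ f hf)).symm

lemma idmFeat_cont (m : MPNNModel) (t : ℕ) : Continuous (idmFeat m t) := by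
  induction t with
  | zero => exact continuous_const
  | succ t ih =>
    refine (m.cont t).comp ?_
    rw [← (PiLp.continuousLinearEquiv 2 ℝ (fun _ : Fin (m.d t) => ℝ)).comp_continuous_iff]
    refine continuous_pi fun i => ?_
    have : Continuous fun α : M (t+1) => ∫ β, idmFeat m t β i ∂toMeas α :=
      M_cont_int _ ((EuclideanSpace.proj (𝕜 := ℝ) i).continuous.comp ih)
    exact this.congr fun α => (vec_int_apply _ _ ih i).symm

/-- Coordinatewise features with index type `ι`. -/
def gfeat {ι : Type} (a : ι → ℝ) (φ : ℕ → (ι → ℝ) → ι → ℝ) : (t : ℕ) → M t → ι → ℝ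
  | 0, _ => a
  | (t+1), α => φ t (fun i => ∫ β, gfeat a φ t β i ∂(toMeas α))

/-- Real functions realized as a coordinate of features with Lipschitz layers. -/
def AFun (t : ℕ) : Set (M t → ℝ) :=
  {f | ∃ (ι : Type) (_ : Fintype ι) (a : ι → ℝ) (φ : ℕ → (ι → ℝ) → ι → ℝ),
    (∀ s, ∃ K : NNReal, LipschitzWith K (φ s)) ∧ ∃ i, f = fun α => gfeat a φ t α i}

lemma gfeat_model {ι : Type} [Fintype ι] (a : ι → ℝ) (φ : ℕ → (ι → ℝ) → ι → ℝ)
    (hφ : ∀ s, ∃ K : NNReal, LipschitzWith K (φ s)) :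
    ∃ (m : MPNNModel) (e : ∀ t, ι → Fin (m.d t)), (∀ t, LipModel m t) ∧
      ∀ t α i, idmFeat m t α (e t i) = gfeat a φ t α i := by
  let e := Fintype.equivFin ι
  have hL : ∀ s, ∃ K : NNReal, LipschitzWith K
      (fun x : EuclideanSpace ℝ (Fin (Fintype.card ι)) =>
        (WithLp.toLp 2 (fun j => φ s (fun i => x (e i)) (e.symm j)) :
          EuclideanSpace ℝ (Fin (Fintype.card ι)))) := by
    intro s
    obtain ⟨K, hK⟩ := hφ s
    have h1 := PiLp.lipschitzWith_toLp 2 (fun _ : Fin (Fintype.card ι) => ℝ)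
    have h2 := PiLp.lipschitzWith_ofLp 2 (fun _ : Fin (Fintype.card ι) => ℝ)
    have h3 : LipschitzWith 1 (fun (x : Fin (Fintype.card ι) → ℝ) (i : ι) => x (e i)) :=
      LipschitzWith.of_dist_le_mul fun x y => by
        simpa using (dist_pi_le_iff dist_nonneg).2 fun i => dist_le_pi_dist x y (e i)
    have h4 : LipschitzWith 1 (fun (x : ι → ℝ) (j : Fin (Fintype.card ι)) => x (e.symm j)) :=
      LipschitzWith.of_dist_le_mul fun x y => by
        simpa using (dist_pi_le_iff dist_nonneg).2 fun i => dist_le_pi_dist x y (e.symm i)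
    exact ⟨_, h1.comp (h4.comp (hK.comp (h3.comp h2)))⟩
  let m : MPNNModel :=
    { d := fun _ => Fintype.card ι
      φ₀ := WithLp.toLp 2 (fun j => a (e.symm j))
      φ := fun s x => WithLp.toLp 2 (fun j => φ s (fun i => x (e i)) (e.symm j))
      cont := fun s => (hL s).choose_spec.continuous }
  refine ⟨m, fun _ => e, fun t s _ => ?_, fun t => ?_⟩
  · obtain ⟨K, hK⟩ := hL s
    exact ⟨K, hK.lipschitzOnWith⟩
  · induction t with
    | zero => intro α i; simp [idmFeat, gfeat, m]
    | succ t ih =>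
      intro α i
      have h1 : ∀ i, (∫ β, idmFeat m t β ∂(toMeas α)) (e i) =
          ∫ β, gfeat a φ t β i ∂(toMeas α) := by
        intro i
        have := vec_int_apply (toMeas α) _ (idmFeat_cont m t) (e i)
        rw [this]
        exact integral_congr_ae (Eventually.of_forall fun β => ih β i)
      have h2 : (fun i => (∫ β, idmFeat m t β ∂(toMeas α)) (e i)) =
          fun i => ∫ β, gfeat a φ t β i ∂(toMeas α) := funext h1
      change φ t (fun i => (∫ β, idmFeat m t β ∂(toMeas α)) (e i)) (e.symm (e i)) =
        φ t (fun i => ∫ β, gfeat a φ t β i ∂(toMeas α)) i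
      rw [h2, Equiv.symm_apply_apply]

lemma AFun_model {t : ℕ} {f : M t → ℝ} (hf : f ∈ AFun t) :
    ∃ (m : MPNNModel) (i : Fin (m.d t)), LipModel m t ∧ ∀ α, idmFeat m t α i = f α := by
  obtain ⟨ι, _, a, φ, hφ, i, rfl⟩ := hf
  obtain ⟨m, e, hm, h⟩ := gfeat_model a φ hφ
  exact ⟨m, e t i, hm t, fun α => h t α i⟩

lemma AFun_cont {t : ℕ} {f : M t → ℝ} (hf : f ∈ AFun t) : Continuous f := by
  obtain ⟨m, i, -, h⟩ := AFun_model hf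
  exact ((EuclideanSpace.proj (𝕜 := ℝ) i).continuous.comp (idmFeat_cont m t)).congr h

lemma AFun_const (t : ℕ) (c : ℝ) : (fun _ => c) ∈ AFun t := by
  refine ⟨Unit, inferInstance, fun _ => c, fun _ _ _ => c, fun s => ⟨0, LipschitzWith.const _⟩,
    (), ?_⟩
  cases t <;> rfl

lemma AFun_op {t : ℕ} {f g : M t → ℝ} (hf : f ∈ AFun t) (hg : g ∈ AFun t)
    (op : ℝ × ℝ → ℝ) (K : NNReal) (hop : LipschitzWith K op) :
    (fun α => op (f α, g α)) ∈ AFun t := by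
  obtain ⟨ι, _, a, φ, hφ, i, rfl⟩ := hf
  obtain ⟨κ, _, b, γ, hγ, j, rfl⟩ := hg
  let cmb : (ι → ℝ) → (κ → ℝ) → (Option (ι ⊕ κ) → ℝ) := fun x y o =>
    match o with
    | none => op (x i, y j)
    | some (Sum.inl i) => x i
    | some (Sum.inr j) => y j
  let Φ : ℕ → (Option (ι ⊕ κ) → ℝ) → (Option (ι ⊕ κ) → ℝ) := fun s x =>
    cmb (φ s (fun i => x (some (Sum.inl i)))) (γ s (fun j => x (some (Sum.inr j))))
  have key : ∀ t α, gfeat (cmb a b) Φ t α = cmb (gfeat a φ t α) (gfeat b γ t α) := by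
    intro t
    induction t with
    | zero => intro α; rfl
    | succ t ih =>
      intro α
      simp only [gfeat, ih]
      rfl
  refine ⟨Option (ι ⊕ κ), inferInstance, cmb a b, Φ, fun s => ?_, none, ?_⟩
  · obtain ⟨K1, h1⟩ := hφ s
    obtain ⟨K2, h2⟩ := hγ s
    have e1 : LipschitzWith 1 (fun (x : Option (ι ⊕ κ) → ℝ) (i : ι) => x (some (Sum.inl i))) :=
      LipschitzWith.of_dist_le_mul fun x y => by
        simpa using (dist_pi_le_iff dist_nonneg).2 fun i => dist_le_pi_dist x y _
    have e2 : LipschitzWith 1 (fun (x : Option (ι ⊕ κ) → ℝ) (j : κ) => x (some (Sum.inr j))) :=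
      LipschitzWith.of_dist_le_mul fun x y => by
        simpa using (dist_pi_le_iff dist_nonneg).2 fun i => dist_le_pi_dist x y _
    have f1 := h1.comp e1
    have f2 := h2.comp e2
    have g1 := fun i => (LipschitzWith.eval (α := fun _ : ι => ℝ) i).comp f1
    have g2 := fun i => (LipschitzWith.eval (α := fun _ : κ => ℝ) i).comp f2
    have g3 := hop.comp ((g1 i).prodMk (g2 j))
    have : ∀ o, ∃ K : NNReal, LipschitzWith K (fun x => Φ s x o) := by
      rintro (_ | i | j)
      · exact ⟨_, g3⟩
      · exact ⟨_, g1 i⟩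
      · exact ⟨_, g2 j⟩
    choose C hC using this
    refine ⟨∑ o, C o, LipschitzWith.of_dist_le_mul fun x y => ?_⟩
    refine (dist_pi_le_iff (by positivity)).2 fun o => ((hC o).dist_le_mul x y).trans ?_
    gcongr
    exact_mod_cast Finset.single_le_sum (f := C) (fun _ _ => zero_le) (Finset.mem_univ o)
  · funext α
    rw [key]

lemma AFun_int {t : ℕ} {f : M t → ℝ} (hf : f ∈ AFun t) :
    (fun α : M (t+1) => ∫ β, f β ∂(toMeas α)) ∈ AFun (t+1) := by
  obtain ⟨ι, _, a, φ, hφ, i, rfl⟩ := hf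
  have key : ∀ s, s ≤ t → ∀ α, gfeat a (Function.update φ t id) s α = gfeat a φ s α := by
    intro s
    induction s with
    | zero => intro _ α; rfl
    | succ s ih =>
      intro hs α
      have : s ≠ t := by omega
      simp only [gfeat, ih (by omega), Function.update_of_ne this]
  refine ⟨ι, inferInstance, a, Function.update φ t id, fun s => ?_, i, ?_⟩
  · by_cases h : s = t
    · subst h
      exact ⟨1, by simpa using LipschitzWith.id⟩
    · simpa [Function.update_of_ne h] using hφ s
  · funext α
    simp [gfeat, key t le_rfl]

lemma AFun_lift {t : ℕ} {f : M t → ℝ} (hf : f ∈ AFun t) :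
    (fun α : M (t+1) => f (projM t α)) ∈ AFun (t+1) := by
  have hc := AFun_cont hf
  obtain ⟨ι, _, a, φ, hφ, i, rfl⟩ := hf
  let Φ : ℕ → (ι → ℝ) → ι → ℝ := fun s => match s with
    | 0 => fun _ => a
    | s+1 => φ s
  have key : ∀ t (α : M (t+1)), gfeat a Φ (t+1) α = gfeat a φ t (projM t α) := by
    intro t
    induction t with
    | zero => intro α; rfl
    | succ t ih =>
      intro α
      rw [gfeat, gfeat]
      simp only [ih, toMeas_projM]
      change φ t _ = φ t _
      congr 1
      funext i
      have h1 : (fun α => gfeat a φ t α i) ∈ AFun t := ⟨ι, inferInstance, a, φ, hφ, i, rfl⟩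
      exact (integral_map (f := fun α => gfeat a φ t α i) (projM_cont t).measurable.aemeasurable
        (AFun_cont h1).measurable.aestronglyMeasurable).symm
  refine ⟨ι, inferInstance, a, Φ, fun s => ?_, i, ?_⟩
  · cases s with
    | zero => exact ⟨0, LipschitzWith.const _⟩
    | succ s => exact hφ s
  · funext α
    rw [key]

/-- Stone-Weierstrass, lattice version. -/
lemma dense_of {X : Type} [TopologicalSpace X] [CompactSpace X] (S : Set (X → ℝ))
    (hconst : ∀ c : ℝ, (fun _ => c) ∈ S)
    (hop : ∀ f ∈ S, ∀ g ∈ S, ∀ (op : ℝ × ℝ → ℝ) (K : NNReal), LipschitzWith K op →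
      (fun x => op (f x, g x)) ∈ S)
    (hsep : ∀ x y : X, x ≠ y → ∃ f ∈ S, f x ≠ f y) :
    closure {f : C(X, ℝ) | (f : X → ℝ) ∈ S} = ⊤ ∨ ∃ f ∈ S, ¬ Continuous f := by
  by_cases hcont : ∃ f ∈ S, ¬ Continuous f
  · exact Or.inr hcont
  push Not at hcont
  left
  have hmin : LipschitzWith 1 (fun p : ℝ × ℝ => min p.1 p.2) := by
    simpa using LipschitzWith.prod_fst.min LipschitzWith.prod_snd
  have hmax : LipschitzWith 1 (fun p : ℝ × ℝ => max p.1 p.2) := by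
    simpa using LipschitzWith.prod_fst.max LipschitzWith.prod_snd
  refine ContinuousMap.sublattice_closure_eq_top _ ⟨ContinuousMap.const X 0, hconst 0⟩ ?_ ?_ ?_
  · intro f hf g hg
    exact hop f hf g hg _ 1 hmin
  · intro f hf g hg
    exact hop f hf g hg _ 1 hmax
  · intro v x y
    by_cases hxy : x = y
    · subst hxy
      exact ⟨ContinuousMap.const X (v x), hconst _, rfl, rfl⟩
    · obtain ⟨f, hf, hne⟩ := hsep x y hxy
      have hne' : f y - f x ≠ 0 := sub_ne_zero.2 (Ne.symm hne)
      let c := (v y - v x) / (f y - f x)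
      let op : ℝ × ℝ → ℝ := fun p => c * (p.1 - f x) + v x
      have hl : LipschitzWith ‖c‖₊ op := by
        refine LipschitzWith.of_dist_le_mul fun p q => ?_
        have h1 : op p - op q = c * (p.1 - q.1) := by simp only [op]; ring
        have h2 : dist p.1 q.1 ≤ dist p q := by rw [Prod.dist_eq]; exact le_max_left _ _
        rw [Real.dist_eq, h1, abs_mul]
        rw [Real.dist_eq] at h2
        simp only [coe_nnnorm, Real.norm_eq_abs]
        gcongr
      have hm := hop f hf f hf op _ hl
      refine ⟨⟨_, hcont _ hm⟩, hm, ?_, ?_⟩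
      · simp [op]
      · simp only [op, c, ContinuousMap.coe_mk]
        field_simp
        ring

lemma AFun_sep_dense (t : ℕ) : (∀ x y : M t, x ≠ y → ∃ f ∈ AFun t, f x ≠ f y) ∧
    closure {f : C(M t, ℝ) | (f : M t → ℝ) ∈ AFun t} = ⊤ := by
  have aux : ∀ t, (∀ x y : M t, x ≠ y → ∃ f ∈ AFun t, f x ≠ f y) →
      closure {f : C(M t, ℝ) | (f : M t → ℝ) ∈ AFun t} = ⊤ := by
    intro t ht
    rcases dense_of (AFun t) (AFun_const t) (fun f hf g hg op K h => AFun_op hf hg op K h) ht with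
      h | ⟨f, hf, hc⟩
    · exact h
    · exact absurd (AFun_cont hf) hc
  have hsep : ∀ x y : M t, x ≠ y → ∃ f ∈ AFun t, f x ≠ f y := by
    induction t with
    | zero =>
      intro x y hxy
      exact absurd (Subsingleton.elim (α := Unit) x y) hxy
    | succ t ih =>
      intro α β hαβ
      by_contra! hcon
      refine hαβ (M_ext (measure_eq_of_dense _ (aux t ih) _ _ (toMeas_le α) (toMeas_le β) ?_))
      intro f hf
      exact hcon _ (AFun_int hf)
  exact ⟨hsep, aux t hsep⟩

/-- Realizable functions on the inverse limit. -/
def AInf : Set (Minf → ℝ) := {f | ∃ t, ∃ g ∈ AFun t, f = fun a => g (a.1 t)}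

lemma AInf_mono {t s : ℕ} (hts : t ≤ s) {g : M t → ℝ} (hg : g ∈ AFun t) :
    ∃ g' ∈ AFun s, ∀ a : Minf, g' (a.1 s) = g (a.1 t) := by
  induction s, hts using Nat.le_induction with
  | base => exact ⟨g, hg, fun _ => rfl⟩
  | succ s _ ih =>
    obtain ⟨g', hg', h⟩ := ih
    refine ⟨_, AFun_lift hg', fun a => ?_⟩
    rw [a.2 s, h]

lemma Minf_proj_cont (t : ℕ) : Continuous (fun a : Minf => a.1 t) :=
  (continuous_apply t).comp continuous_subtype_val

instance : CompactSpace Minf := by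
  have : IsClosed {α : (h : ℕ) → M h | ∀ h, projM h (α (h+1)) = α h} := by
    simp only [Set.ofPred_forall]
    exact isClosed_iInter fun h =>
      isClosed_eq ((projM_cont h).comp (continuous_apply (h+1))) (continuous_apply h)
  exact isCompact_iff_compactSpace.1 this.isCompact

lemma AInf_dense : closure {f : C(Minf, ℝ) | (f : Minf → ℝ) ∈ AInf} = ⊤ := by
  have hop : ∀ f ∈ AInf, ∀ g ∈ AInf, ∀ (op : ℝ × ℝ → ℝ) (K : NNReal), LipschitzWith K op →
      (fun x => op (f x, g x)) ∈ AInf := by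
    rintro _ ⟨t, f, hf, rfl⟩ _ ⟨s, g, hg, rfl⟩ op K hop
    obtain ⟨f', hf', h1⟩ := AInf_mono (le_max_left t s) hf
    obtain ⟨g', hg', h2⟩ := AInf_mono (le_max_right t s) hg
    exact ⟨max t s, _, AFun_op hf' hg' op K hop, by funext a; simp only [h1, h2]⟩
  have hsep : ∀ x y : Minf, x ≠ y → ∃ f ∈ AInf, f x ≠ f y := by
    intro x y hxy
    have : ∃ t, x.1 t ≠ y.1 t := by
      by_contra! h
      exact hxy (Subtype.ext (funext h))
    obtain ⟨t, ht⟩ := this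
    obtain ⟨f, hf, hne⟩ := (AFun_sep_dense t).1 _ _ ht
    exact ⟨_, ⟨t, f, hf, rfl⟩, hne⟩
  rcases dense_of AInf (fun c => ⟨0, _, AFun_const 0 c, rfl⟩) hop hsep with h | ⟨f, hf, hc⟩
  · exact h
  · obtain ⟨t, g, hg, rfl⟩ := hf
    exact absurd ((AFun_cont hg).comp (Minf_proj_cont t)) hc

lemma vec_tendsto {X : Type} [MeasurableSpace X] [TopologicalSpace X] [BorelSpace X]
    [CompactSpace X] (ν : ProbM X) (νs : ℕ → ProbM X) (h : Tendsto νs atTop (𝓝 ν)) {k : ℕ}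
    (F : X → EuclideanSpace ℝ (Fin k)) (hF : Continuous F) :
    Tendsto (fun i => ∫ x, F x ∂(νs i).1) atTop (𝓝 (∫ x, F x ∂ν.1)) := by
  rw [prob_tendsto_iff] at h
  have hp : ∀ ν : ProbM X, IsFiniteMeasure ν.1 := fun ν => by have := ν.2; infer_instance
  have hcoord : Tendsto (fun i => WithLp.ofLp (∫ x, F x ∂(νs i).1)) atTop
      (𝓝 (WithLp.ofLp (∫ x, F x ∂ν.1))) := by
    rw [tendsto_pi_nhds]
    intro j
    have := h (BoundedContinuousFunction.mkOfCompact
      ⟨fun x => F x j, (EuclideanSpace.proj (𝕜 := ℝ) j).continuous.comp hF⟩)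
    have e : ∀ ν : ProbM X, (∫ x, F x ∂ν.1) j = ∫ x, F x j ∂ν.1 := fun ν =>
      have := hp ν
      vec_int_apply ν.1 F hF j
    simp only [e]
    exact this
  exact ((PiLp.continuous_toLp 2 (fun _ : Fin k => ℝ)).tendsto _).comp hcoord

lemma readout {n : ℕ} {k : ℕ} (i : Fin k) : ∃ K : NNReal, LipschitzWith K
    (fun x : EuclideanSpace ℝ (Fin k) =>
      (WithLp.toLp 2 (fun _ => x i) : EuclideanSpace ℝ (Fin n))) := by
  have h1 := PiLp.lipschitzWith_toLp 2 (fun _ : Fin n => ℝ)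
  have h2 := PiLp.lipschitzWith_ofLp 2 (fun _ : Fin k => ℝ)
  have h3 : LipschitzWith 1 (fun (x : Fin k → ℝ) (_ : Fin n) => x i) :=
    LipschitzWith.of_dist_le_mul fun x y => by
      simpa using (dist_pi_le_iff dist_nonneg).2 fun _ => dist_le_pi_dist x y i
  exact ⟨_, h1.comp (h3.comp h2)⟩

/-- Weak convergence of probability measures on `M L` (for `0 ≤ L ≤ ∞`) is
equivalent to convergence of the outputs of all `L`-layer MPNN models followed by a
Lipschitz readout `ψ : ℝ^{d_L} → ℝⁿ`. -/
theorem weak_convergence_iff_mpnn_convergence (n : ℕ) (hn : 0 < n) :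
    (∀ L : ℕ, ∀ ν : ProbM (M L), ∀ νs : ℕ → ProbM (M L),
      Filter.Tendsto νs Filter.atTop (nhds ν) ↔
        ∀ (m : MPNNModel), LipModel m L →
          ∀ (ψ : EuclideanSpace ℝ (Fin (m.d L)) → EuclideanSpace ℝ (Fin n))
            (K : NNReal), LipschitzWith K ψ →
            Filter.Tendsto (fun i => ψ (∫ β, idmFeat m L β ∂(νs i).1))
              Filter.atTop (nhds (ψ (∫ β, idmFeat m L β ∂ν.1)))) ∧
    (∀ ν : ProbM Minf, ∀ νs : ℕ → ProbM Minf,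
      Filter.Tendsto νs Filter.atTop (nhds ν) ↔
        ∀ (L : ℕ) (m : MPNNModel), LipModel m L →
          ∀ (ψ : EuclideanSpace ℝ (Fin (m.d L)) → EuclideanSpace ℝ (Fin n))
            (K : NNReal), LipschitzWith K ψ →
            Filter.Tendsto
              (fun i => ψ (∫ β, idmFeat m L β ∂((νs i).1.map fun a => a.1 L)))
              Filter.atTop
              (nhds (ψ (∫ β, idmFeat m L β ∂(ν.1.map fun a => a.1 L))))) := by
  constructor
  · intro L ν νs
    constructor
    · intro h m _ ψ K hψ
      exact (hψ.continuous.tendsto _).comp (vec_tendsto ν νs h _ (idmFeat_cont m L))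
    · intro h
      refine prob_tendsto_of_dense _ (AFun_sep_dense L).2 ν νs fun f hf => ?_
      obtain ⟨m, i, hm, hmf⟩ := AFun_model hf
      obtain ⟨K, hK⟩ := readout (n := n) i
      have h1 := h m hm _ K hK
      have h2 := ((EuclideanSpace.proj (𝕜 := ℝ) (⟨0, hn⟩ : Fin n)).continuous.tendsto _).comp h1
      have e : ∀ ν : ProbM (M L), (∫ β, idmFeat m L β ∂ν.1) i = ∫ β, f β ∂ν.1 := fun ν => by
        have := ν.2
        rw [vec_int_apply ν.1 _ (idmFeat_cont m L) i]
        simp only [hmf]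
      rw [← e]
      simp only [← e]
      exact h2
  · intro ν νs
    have hpush : ∀ (ν : ProbM Minf) (L k : ℕ) (F : M L → EuclideanSpace ℝ (Fin k)),
        Continuous F → ∫ β, F β ∂(ν.1.map fun a => a.1 L) = ∫ a, F (a.1 L) ∂ν.1 :=
      fun ν L k F hF => integral_map (Minf_proj_cont L).measurable.aemeasurable
        hF.measurable.aestronglyMeasurable
    constructor
    · intro h L m _ ψ K hψ
      simp only [hpush _ _ _ _ (idmFeat_cont m L)]
      exact (hψ.continuous.tendsto _).comp
        (vec_tendsto ν νs h _ ((idmFeat_cont m L).comp (Minf_proj_cont L)))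
    · intro h
      refine prob_tendsto_of_dense _ AInf_dense ν νs fun f hf => ?_
      obtain ⟨L, g, hg, hfg⟩ := hf
      obtain ⟨m, i, hm, hmf⟩ := AFun_model hg
      obtain ⟨K, hK⟩ := readout (n := n) i
      have h1 := h L m hm _ K hK
      simp only [hpush _ _ _ _ (idmFeat_cont m L)] at h1
      have h2 := ((EuclideanSpace.proj (𝕜 := ℝ) (⟨0, hn⟩ : Fin n)).continuous.tendsto _).comp h1
      have e : ∀ ν : ProbM Minf, (∫ a, idmFeat m L (a.1 L) ∂ν.1) i = ∫ a, f a ∂ν.1 := fun ν => by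
        have := ν.2
        rw [vec_int_apply ν.1 (fun a => idmFeat m L (a.1 L))
          ((idmFeat_cont m L).comp (Minf_proj_cont L)) i]
        simp only [hmf, hfg]
      rw [← e]
      simp only [← e]
      exact h2


end
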